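/- arXiv:1709.07112 — 2 statements merged into one kernel-verified Lean document; each statement's English description precedes it below -/
import Mathlib

section
/- Fix n ≥ 1 and dimensions n_j, m. For i = 1, …, n let H_i : [0,∞) → ℝ^{n_j×n_j} be continuously differentiable with H_i(t) symmetric and H_i'(t) = C_i(t) + C_i(t)ᵀ for a continuous C_i, let K_{D_i} be symmetric positive definite, let Y_i : [0,∞) → ℝ^{n_j×m} be continuous, let P_i ∈ ℝ^{m×m} be symmetric positive definite, and let K ∈ ℝ^{m×m} be symmetric positive definite. Suppose differentiable functions s_i : [0,∞) → ℝ^{n_j} and ã_i : [0,∞) → ℝ^m satisfy H_i(t)ṡ_i(t) + (C_i(t) + K_{D_i})s_i(t) = Y_i(t)ã_i(t) and the decentralized update ã̇_i(t) = −P_i[Y_i(t)ᵀs_i(t) − (K/n)∑_{j=1}^n (ã_j(t) − ã_i(t))]. Then V(t) = ∑_{i=1}^n (1/2)(s_i(t)ᵀH_i(t)s_i(t) + ã_i(t)ᵀP_i⁻¹ã_i(t)) is differentiable with V'(t) = −∑_{i=1}^n s_i(t)ᵀK_{D_i}s_i(t) − ã(t)ᵀL_K ã(t) ≤ 0 for all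 t ≥ 0, where ã(t) = (ã_1(t), …, ã_n(t)) is the stacked error and L_K = (I_n − (1/n)𝟙𝟙ᵀ) ⊗ K. -/
/-!
The two halves of the energy of one agent are differentiated separately. For symmetric `H` with
`H' = C + Cᵀ`, the derivative of `½ sᵀHs` is `sᵀ(H ṡ + C s)`, which the error dynamics turn into
`sᵀYã - sᵀK_D s`. The update law turns the derivative of `½ ãᵀP⁻¹ã` into `-ãᵀYᵀs` plus the coupling
term, so the terms in `Y` cancel. Summed over the agents, the coupling terms are exactly
`-ãᵀ L_K ã` (`blockLaplacian_quadratic`). The sign follows because `I - (1/n) 𝟙𝟙ᵀ` is an orthogonal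
projection, so that its Kronecker product with `K` is positive semidefinite.
-/

open Matrix Kronecker MeasureTheory Filter Topology

/-- The block Laplacian `L_K = (I_n − (1/n) 𝟙𝟙ᵀ) ⊗ K` of an all-to-all coupled
network of `n` agents with coupling gain `K`. -/
noncomputable def blockLaplacian (n m : ℕ) (K : Matrix (Fin m) (Fin m) ℝ) :
    Matrix (Fin n × Fin m) (Fin n × Fin m) ℝ :=
  ((1 : Matrix (Fin n) (Fin n) ℝ) - (n : ℝ)⁻¹ • Matrix.of fun _ _ => (1:ℝ)) ⊗ₖ K

theorem hasDerivWithinAt_dotProduct {k : ℕ} {x y : ℝ → Fin k → ℝ} {dx dy : Fin k → ℝ}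
    {S : Set ℝ} {t : ℝ} (hx : HasDerivWithinAt x dx S t) (hy : HasDerivWithinAt y dy S t) :
    HasDerivWithinAt (fun τ => x τ ⬝ᵥ y τ) (dx ⬝ᵥ y t + x t ⬝ᵥ dy) S t := by
  rw [hasDerivWithinAt_pi] at hx hy
  simp only [dotProduct, ← Finset.sum_add_distrib]
  exact HasDerivWithinAt.fun_sum fun a _ => (hx a).mul (hy a)

theorem hasDerivWithinAt_mulVec {k : ℕ} {A : ℝ → Matrix (Fin k) (Fin k) ℝ}
    {dA : Matrix (Fin k) (Fin k) ℝ} {x : ℝ → Fin k → ℝ} {dx : Fin k → ℝ} {S : Set ℝ} {t : ℝ}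
    (hA : ∀ a b, HasDerivWithinAt (fun τ => A τ a b) (dA a b) S t)
    (hx : HasDerivWithinAt x dx S t) :
    HasDerivWithinAt (fun τ => A τ *ᵥ x τ) (dA *ᵥ x t + A t *ᵥ dx) S t := by
  rw [hasDerivWithinAt_pi]
  intro a
  exact hasDerivWithinAt_dotProduct (hasDerivWithinAt_pi.2 (hA a)) hx

theorem dotProduct_mulVec_comm_of_isSymm {k : ℕ} {A : Matrix (Fin k) (Fin k) ℝ} (hA : A.IsSymm)
    (x y : Fin k → ℝ) : x ⬝ᵥ (A *ᵥ y) = y ⬝ᵥ (A *ᵥ x) := by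
  rw [dotProduct_mulVec, ← mulVec_transpose, hA.eq, dotProduct_comm]

theorem hasDerivWithinAt_half_quadratic {k : ℕ} {A : ℝ → Matrix (Fin k) (Fin k) ℝ}
    {dA : Matrix (Fin k) (Fin k) ℝ} {x : ℝ → Fin k → ℝ} {dx : Fin k → ℝ} {S : Set ℝ} {t : ℝ}
    (hsymm : (A t).IsSymm)
    (hA : ∀ a b, HasDerivWithinAt (fun τ => A τ a b) (dA a b) S t)
    (hx : HasDerivWithinAt x dx S t) :
    HasDerivWithinAt (fun τ => (1/2) * (x τ ⬝ᵥ (A τ *ᵥ x τ)))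
      (x t ⬝ᵥ (A t *ᵥ dx) + (1/2) * (x t ⬝ᵥ (dA *ᵥ x t))) S t := by
  refine ((hasDerivWithinAt_dotProduct hx (hasDerivWithinAt_mulVec hA hx)).const_mul
    (1/2 : ℝ)).congr_deriv ?_
  rw [dotProduct_add, dotProduct_mulVec_comm_of_isSymm hsymm dx]
  ring

/-- The quadratic form of the block Laplacian is minus the total power of the coupling terms. -/
theorem blockLaplacian_quadratic {n m : ℕ} (hn : 1 ≤ n) (K : Matrix (Fin m) (Fin m) ℝ)
    (x : Fin n → Fin m → ℝ) :
    (fun q : Fin n × Fin m => x q.1 q.2) ⬝ᵥ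
        (blockLaplacian n m K *ᵥ fun q : Fin n × Fin m => x q.1 q.2) =
      -∑ i, x i ⬝ᵥ ((n : ℝ)⁻¹ • (K *ᵥ ∑ j, (x j - x i))) := by
  have hn0 : (n : ℝ) ≠ 0 := by positivity
  have hrow : ∀ i a, (blockLaplacian n m K *ᵥ fun q : Fin n × Fin m => x q.1 q.2) (i, a) =
      (K *ᵥ x i) a - (n : ℝ)⁻¹ * (K *ᵥ ∑ j, x j) a := by
    intro i a
    rw [mulVec_sum, Finset.sum_apply, Finset.mul_sum]
    simp only [mulVec, dotProduct, blockLaplacian, Fintype.sum_prod_type, kroneckerMap_apply,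
      Matrix.sub_apply, Matrix.smul_apply, Matrix.of_apply, smul_eq_mul, mul_one, sub_mul,
      Finset.sum_sub_distrib, Finset.mul_sum, mul_assoc]
    congr 1
    simp [Matrix.one_apply]
  have hcoup : ∀ i, (n : ℝ)⁻¹ • (K *ᵥ ∑ j, (x j - x i)) =
      (n : ℝ)⁻¹ • (K *ᵥ ∑ j, x j) - K *ᵥ x i := by
    intro i
    rw [Finset.sum_sub_distrib, Finset.sum_const, Finset.card_univ, Fintype.card_fin, mulVec_sub,
      ← Nat.cast_smul_eq_nsmul ℝ, mulVec_smul, smul_sub, smul_smul, inv_mul_cancel₀ hn0, one_smul]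
  simp only [hcoup, ← Finset.sum_neg_distrib, ← dotProduct_neg, neg_sub]
  simp only [dotProduct, Fintype.sum_prod_type, hrow, Pi.sub_apply, Pi.smul_apply, smul_eq_mul]

theorem blockLaplacian_posSemidef {n m : ℕ} (hn : 1 ≤ n) {K : Matrix (Fin m) (Fin m) ℝ}
    (hK : K.PosSemidef) : (blockLaplacian n m K).PosSemidef := by
  have hn0 : (n : ℝ) ≠ 0 := by positivity
  set M : Matrix (Fin n) (Fin n) ℝ := 1 - (n : ℝ)⁻¹ • Matrix.of fun _ _ => (1:ℝ) with hM
  -- `M` is the orthogonal projection onto the complement of the constant vectors.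
  have hproj : Mᴴ * M = M := by
    have hH : Mᴴ = M := by
      ext i j
      simp [hM, Matrix.one_apply, eq_comm]
    have hJ : (Matrix.of fun _ _ => (1:ℝ) : Matrix (Fin n) (Fin n) ℝ) *
        (Matrix.of fun _ _ => (1:ℝ)) = (n : ℝ) • Matrix.of fun _ _ => (1:ℝ) := by
      ext i j
      simp [Matrix.mul_apply]
    rw [hH, hM, sub_mul, mul_sub, mul_sub, one_mul, mul_one, one_mul, smul_mul_smul_comm, hJ,
      smul_smul, mul_assoc, inv_mul_cancel₀ hn0, mul_one, sub_self, sub_zero]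
  have hMpos : M.PosSemidef := hproj ▸ posSemidef_conjTranspose_mul_self M
  exact hMpos.kronecker hK

/-- for `n` manipulators with error dynamics
`H_i ṡ_i + (C_i + K_{D_i}) s_i = Y_i ã_i` and the decentralized update law
`ã̇_i = −P_i [Y_iᵀ s_i − (K/n) ∑ⱼ (ã_j − ã_i)]`, the Lyapunov function
`V = ∑ᵢ (1/2)(s_iᵀ H_i s_i + ã_iᵀ P_i⁻¹ ã_i)` is differentiable with
`V' = −∑ᵢ s_iᵀ K_{D_i} s_i − ãᵀ L_K ã ≤ 0`, where `ã` is the stacked error. -/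
theorem decentralized_lyapunov_derivative (n nj m : ℕ) (hn : 1 ≤ n)
    (H C : Fin n → ℝ → Matrix (Fin nj) (Fin nj) ℝ)
    (KD : Fin n → Matrix (Fin nj) (Fin nj) ℝ)
    (Y : Fin n → ℝ → Matrix (Fin nj) (Fin m) ℝ)
    (Pm : Fin n → Matrix (Fin m) (Fin m) ℝ)
    (K : Matrix (Fin m) (Fin m) ℝ)
    (s ds : Fin n → ℝ → Fin nj → ℝ) (at' : Fin n → ℝ → Fin m → ℝ)
    -- each `H i t` is symmetric, continuously differentiable with `H' = C + Cᵀ`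
    (hHsymm : ∀ i t, 0 ≤ t → (H i t).IsSymm)
    (hHd : ∀ i, ∀ t, 0 ≤ t → ∀ a b,
      HasDerivWithinAt (fun τ => H i τ a b) ((C i t + (C i t)ᵀ) a b) (Set.Ici 0) t)
    (hCc : ∀ i a b, ContinuousOn (fun t => C i t a b) (Set.Ici 0))
    (hYc : ∀ i a b, ContinuousOn (fun t => Y i t a b) (Set.Ici 0))
    -- the gains are symmetric positive definite
    (hKD : ∀ i, (KD i).PosDef) (hPm : ∀ i, (Pm i).PosDef) (hK : K.PosDef)
    -- closed-loop dynamics and decentralized update law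
    (hs : ∀ i, ∀ t, 0 ≤ t → HasDerivWithinAt (s i) (ds i t) (Set.Ici 0) t)
    (hdyn : ∀ i, ∀ t, 0 ≤ t →
      H i t *ᵥ ds i t + (C i t + KD i) *ᵥ s i t = Y i t *ᵥ at' i t)
    (hat : ∀ i, ∀ t, 0 ≤ t →
      HasDerivWithinAt (at' i)
        (-(Pm i *ᵥ ((Y i t)ᵀ *ᵥ s i t -
          (n : ℝ)⁻¹ • (K *ᵥ ∑ j, (at' j t - at' i t))))) (Set.Ici 0) t) :
    ∀ t, 0 ≤ t →
      HasDerivWithinAt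
        (fun τ => ∑ i, (1/2) * (s i τ ⬝ᵥ (H i τ *ᵥ s i τ) +
          at' i τ ⬝ᵥ ((Pm i)⁻¹ *ᵥ at' i τ)))
        (-(∑ i, s i t ⬝ᵥ (KD i *ᵥ s i t)) -
          (fun q : Fin n × Fin m => at' q.1 t q.2) ⬝ᵥ
            (blockLaplacian n m K *ᵥ fun q : Fin n × Fin m => at' q.1 t q.2))
        (Set.Ici 0) t ∧
      (-(∑ i, s i t ⬝ᵥ (KD i *ᵥ s i t)) -
          (fun q : Fin n × Fin m => at' q.1 t q.2) ⬝ᵥ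
            (blockLaplacian n m K *ᵥ fun q : Fin n × Fin m => at' q.1 t q.2)) ≤ 0 := by
  intro t ht
  refine ⟨?_, ?_⟩
  · have hagent : ∀ i, HasDerivWithinAt
        (fun τ => (1/2) * (s i τ ⬝ᵥ (H i τ *ᵥ s i τ) + at' i τ ⬝ᵥ ((Pm i)⁻¹ *ᵥ at' i τ)))
        (-(s i t ⬝ᵥ (KD i *ᵥ s i t)) +
          at' i t ⬝ᵥ ((n : ℝ)⁻¹ • (K *ᵥ ∑ j, (at' j t - at' i t)))) (Set.Ici 0) t := by
      intro i
      have hPsymm : (Pm i)⁻¹.IsSymm := by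
        have h := (hPm i).inv.isHermitian
        rwa [IsHermitian, conjTranspose_eq_transpose_of_trivial] at h
      have h1 := hasDerivWithinAt_half_quadratic (hHsymm i t ht) (hHd i t ht) (hs i t ht)
      have h2 := hasDerivWithinAt_half_quadratic (A := fun _ => (Pm i)⁻¹) (dA := 0) hPsymm
        (fun a b => hasDerivWithinAt_const t _ _) (hat i t ht)
      simp only [mul_add]
      refine (h1.add h2).congr_deriv ?_
      have hPdet : IsUnit (Pm i).det := (hPm i).det_pos.ne'.isUnit
      have hCT : s i t ⬝ᵥ ((C i t)ᵀ *ᵥ s i t) = s i t ⬝ᵥ (C i t *ᵥ s i t) := by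
        rw [mulVec_transpose, dotProduct_comm, ← dotProduct_mulVec]
      have hYT : at' i t ⬝ᵥ ((Y i t)ᵀ *ᵥ s i t) = s i t ⬝ᵥ (Y i t *ᵥ at' i t) := by
        rw [mulVec_transpose, dotProduct_comm, ← dotProduct_mulVec]
      have hd := congrArg (fun v => s i t ⬝ᵥ v) (hdyn i t ht)
      simp only [add_mulVec, dotProduct_add] at hd
      rw [mulVec_neg, mulVec_mulVec, nonsing_inv_mul _ hPdet, one_mulVec, add_mulVec,
        dotProduct_add, hCT, zero_mulVec, dotProduct_zero, dotProduct_neg, dotProduct_sub, hYT]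
      linarith
    refine (HasDerivWithinAt.fun_sum fun i _ => hagent i).congr_deriv ?_
    rw [Finset.sum_add_distrib, Finset.sum_neg_distrib,
      blockLaplacian_quadratic hn K fun i => at' i t, sub_neg_eq_add]
  · have hL := (blockLaplacian_posSemidef hn hK.posSemidef).dotProduct_mulVec_nonneg
      fun q : Fin n × Fin m => at' q.1 t q.2
    have hD : 0 ≤ ∑ i, s i t ⬝ᵥ (KD i *ᵥ s i t) := Finset.sum_nonneg fun i _ => by
      simpa using (hKD i).posSemidef.dotProduct_mulVec_nonneg (s i t)
    simp only [star_trivial] at hL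
    linarith
end

section
/- Fix n ≥ 1 and dimensions n_j, m. For i = 1, …, n let H_i : [0,∞) → ℝ^{n_j×n_j} be continuously differentiable with H_i(t) symmetric and μI ⪯ H_i(t) ⪯ MI (0 < μ ≤ M); let C_i be continuous and bounded with H_i'(t) = C_i(t) + C_i(t)ᵀ; let K_{D_i}, P_i, K be symmetric positive definite; and let Y_i : [0,∞) → ℝ^{n_j×m} be continuously differentiable with Y_i and Y_i' bounded. Suppose differentiable s_i and ã_i satisfy H_i(t)ṡ_i(t) + (C_i(t) + K_{D_i})s_i(t) = Y_i(t)ã_i(t) and the decentralized update ã̇_i(t) = −P_i[Y_i(t)ᵀs_i(t) − (K/n)∑_{j=1}^n (ã_j(t) − ã_i(t))]. If the family {Y_1, …, Y_n} is collectively persistently exciting, then every parameter error satisfies ã_i(t) → 0 as t → ∞. -/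
/-!
The Lyapunov function `V = ∑ᵢ (sᵢ · Hᵢ sᵢ + ãᵢ · Pᵢ⁻¹ ãᵢ)` satisfies `V' = -q`, where
`q = 2 ∑ᵢ sᵢ · K_{D_i} sᵢ + n⁻¹ ∑ᵢⱼ (ãⱼ - ãᵢ) · K (ãⱼ - ãᵢ)`: the skew-symmetry `Hᵢ' = Cᵢ + Cᵢᵀ`
removes the Coriolis terms (`hasDerivAt_kinetic`), the adaptation cancels the terms `sᵢ · Yᵢ ãᵢ`
(`hasDerivAt_estimate`), and the coupling is a sum of squares (`consensus_identity`). Hence all `sᵢ`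
and `ãᵢ` are bounded, so `q'` is bounded, and `q → 0` (`tendsto_zero_of_dissipation`). It follows that
`sᵢ → 0`, that the disagreements `ãⱼ - ãᵢ` vanish, and that the rates `ãᵢ'` vanish.

It remains to exploit the excitation. The function `gᵢ = (Hᵢ sᵢ) · (Yᵢ ãᵢ)` tends to `0`, and
`gᵢ' = |Yᵢ ãᵢ|² + o(1)` (`hasDerivAt_cross`). Integrating over `[t, t + T]` shows that `|Yᵢ ãᵢ|²` has
vanishing integral over such windows. Since all the `ãᵢ` agree asymptotically and are almost
constant over a window, the same is true of `|Yᵢ v|²` for the fixed vector `v = ã_{i₀}(t)`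
(`window_bound`). Collective excitation bounds the sum of these integrals below by `α T |v|²`, so
`ã_{i₀}(t) → 0`.

Boundedness and convergence to `0` of a signal `u` are expressed as `u =O[atTop] 1` and
`u =o[atTop] 1`. Vectors carry the sup norm.
-/

open Matrix MeasureTheory Filter Topology

/-- The (unnormalized) integral of the Gram matrix `Wᵀ W` over the window `[t, t+T]`. -/
noncomputable def gramInt {P : Type} [Fintype P] {m : ℕ}
    (W : ℝ → Matrix P (Fin m) ℝ) (t T : ℝ) : Matrix (Fin m) (Fin m) ℝ :=
  Matrix.of fun a b => ∫ τ in t..(t + T), ((W τ)ᵀ * W τ) a b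

/-- The family `{W i}` is collectively persistently exciting with window `T` and level `α`. -/
def CollPEWith {ι : Type} [Fintype ι] {P : ι → Type} [∀ i, Fintype (P i)] {m : ℕ}
    (W : (i : ι) → ℝ → Matrix (P i) (Fin m) ℝ) (T α : ℝ) : Prop :=
  ∀ t, 0 ≤ t →
    (T⁻¹ • (∑ i, gramInt (W i) t T) - α • (1 : Matrix (Fin m) (Fin m) ℝ)).PosSemidef

open Asymptotics

/-! ### Derivatives and asymptotics of matrix-vector expressions -/

lemma hasDerivAt_dotProduct {k : ℕ} {u v : ℝ → Fin k → ℝ} {u' v' : Fin k → ℝ} {t : ℝ}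
    (hu : HasDerivAt u u' t) (hv : HasDerivAt v v' t) :
    HasDerivAt (fun τ => u τ ⬝ᵥ v τ) (u' ⬝ᵥ v t + u t ⬝ᵥ v') t := by
  simp only [dotProduct, ← Finset.sum_add_distrib]
  exact HasDerivAt.fun_sum fun i _ => (hasDerivAt_pi.1 hu i).mul (hasDerivAt_pi.1 hv i)

lemma hasDerivAt_mulVec {k l : ℕ} {A : ℝ → Matrix (Fin k) (Fin l) ℝ} {A' : Matrix (Fin k) (Fin l) ℝ}
    {v : ℝ → Fin l → ℝ} {v' : Fin l → ℝ} {t : ℝ}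
    (hA : ∀ a b, HasDerivAt (fun τ => A τ a b) (A' a b) t) (hv : HasDerivAt v v' t) :
    HasDerivAt (fun τ => A τ *ᵥ v τ) (A' *ᵥ v t + A t *ᵥ v') t := by
  refine hasDerivAt_pi.2 fun a => ?_
  exact hasDerivAt_dotProduct (hasDerivAt_pi.2 (hA a)) hv

lemma hasDerivAt_const_mulVec {k l : ℕ} (A : Matrix (Fin k) (Fin l) ℝ)
    {v : ℝ → Fin l → ℝ} {v' : Fin l → ℝ} {t : ℝ} (hv : HasDerivAt v v' t) :
    HasDerivAt (fun τ => A *ᵥ v τ) (A *ᵥ v') t := by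
  simpa using hasDerivAt_mulVec (A := fun _ => A) (A' := 0)
    (fun a b => by simpa using hasDerivAt_const t (A a b)) hv

lemma dotProduct_isBigO {k : ℕ} {u v : ℝ → Fin k → ℝ}
    (hu : u =O[atTop] (fun _ => (1 : ℝ))) (hv : v =O[atTop] (fun _ => (1 : ℝ))) :
    (fun t => u t ⬝ᵥ v t) =O[atTop] (fun _ => (1 : ℝ)) := by
  simp only [dotProduct]
  exact IsBigO.fun_sum fun i _ => by simpa using (isBigO_pi.1 hu i).mul (isBigO_pi.1 hv i)

lemma dotProduct_isLittleO {k : ℕ} {u v : ℝ → Fin k → ℝ}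
    (hu : u =o[atTop] (fun _ => (1 : ℝ))) (hv : v =O[atTop] (fun _ => (1 : ℝ))) :
    (fun t => u t ⬝ᵥ v t) =o[atTop] (fun _ => (1 : ℝ)) := by
  simp only [dotProduct]
  exact IsLittleO.fun_sum fun i _ => by
    simpa using (isLittleO_pi.1 hu i).mul_isBigO (isBigO_pi.1 hv i)

lemma mulVec_isBigO {k l : ℕ} {A : ℝ → Matrix (Fin k) (Fin l) ℝ} {v : ℝ → Fin l → ℝ}
    (hA : ∀ a b, (fun t => A t a b) =O[atTop] (fun _ => (1 : ℝ)))
    (hv : v =O[atTop] (fun _ => (1 : ℝ))) :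
    (fun t => A t *ᵥ v t) =O[atTop] (fun _ => (1 : ℝ)) :=
  isBigO_pi.2 fun a => dotProduct_isBigO (isBigO_pi.2 (hA a)) hv

lemma mulVec_isLittleO {k l : ℕ} {A : ℝ → Matrix (Fin k) (Fin l) ℝ} {v : ℝ → Fin l → ℝ}
    (hA : ∀ a b, (fun t => A t a b) =O[atTop] (fun _ => (1 : ℝ)))
    (hv : v =o[atTop] (fun _ => (1 : ℝ))) :
    (fun t => A t *ᵥ v t) =o[atTop] (fun _ => (1 : ℝ)) :=
  isLittleO_pi.2 fun a => by
    simpa only [mulVec, dotProduct_comm] using dotProduct_isLittleO hv (isBigO_pi.2 (hA a))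

lemma isBigO_const_one' (c : ℝ) : (fun _ : ℝ => c) =O[atTop] (fun _ => (1 : ℝ)) :=
  isBigO_const_const c one_ne_zero _

/-! ### Quadratic forms -/

lemma norm_sq_le_dotProduct {k : ℕ} (v : Fin k → ℝ) : ‖v‖ ^ 2 ≤ v ⬝ᵥ v := by
  have h0 : 0 ≤ v ⬝ᵥ v := Finset.sum_nonneg fun i _ => mul_self_nonneg (v i)
  refine (Real.le_sqrt (norm_nonneg v) h0).1 ?_
  refine (pi_norm_le_iff_of_nonneg (Real.sqrt_nonneg _)).2 fun i => ?_
  refine Real.abs_le_sqrt ?_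
  rw [pow_two]
  exact Finset.single_le_sum (f := fun i => v i * v i) (fun i _ => mul_self_nonneg (v i))
    (Finset.mem_univ i)

lemma abs_dotProduct_le {k : ℕ} (u v : Fin k → ℝ) : |u ⬝ᵥ v| ≤ k * (‖u‖ * ‖v‖) := by
  refine (Finset.abs_sum_le_sum_abs _ _).trans ?_
  refine (Finset.sum_le_card_nsmul _ _ (‖u‖ * ‖v‖) fun i _ => ?_).trans (by simp)
  rw [abs_mul]
  exact mul_le_mul (norm_le_pi_norm u i) (norm_le_pi_norm v i) (abs_nonneg _) (norm_nonneg _)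

lemma posSemidef_nonneg {k : ℕ} {A : Matrix (Fin k) (Fin k) ℝ} (hA : A.PosSemidef)
    (v : Fin k → ℝ) : 0 ≤ v ⬝ᵥ A *ᵥ v := by
  simpa using hA.dotProduct_mulVec_nonneg v

/-- Coercivity of a positive definite form, by compactness of the unit sphere. The norm is the sup norm
of `Fin k → ℝ`, which only affects the constant. -/
lemma posDef_lower_bound {k : ℕ} {A : Matrix (Fin k) (Fin k) ℝ} (hA : A.PosDef) :
    ∃ c > 0, ∀ v : Fin k → ℝ, c * ‖v‖ ^ 2 ≤ v ⬝ᵥ A *ᵥ v := by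
  have hpos : ∀ v : Fin k → ℝ, v ≠ 0 → 0 < v ⬝ᵥ A *ᵥ v := fun v hv => by
    simpa using hA.dotProduct_mulVec_pos hv
  have hcont : Continuous fun v : Fin k → ℝ => v ⬝ᵥ A *ᵥ v :=
    continuous_id.dotProduct (continuous_const.matrix_mulVec continuous_id)
  rcases (Metric.sphere (0 : Fin k → ℝ) 1).eq_empty_or_nonempty with he | hne
  · refine ⟨1, one_pos, fun v => ?_⟩
    by_cases hv : v = 0
    · simp [hv]
    · have : ‖v‖⁻¹ • v ∈ Metric.sphere (0 : Fin k → ℝ) 1 := by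
        simp [norm_smul, hv]
      simp [he] at this
  · obtain ⟨w, hw, hmin⟩ := (isCompact_sphere (0 : Fin k → ℝ) 1).exists_isMinOn hne
      hcont.continuousOn
    have hw0 : w ≠ 0 := by
      rintro rfl
      simp at hw
    refine ⟨_, hpos w hw0, fun v => ?_⟩
    by_cases hv : v = 0
    · simp [hv]
    · have hm : ‖v‖⁻¹ • v ∈ Metric.sphere (0 : Fin k → ℝ) 1 := by
        simp [norm_smul, hv]
      have h1 := hmin hm
      simp only [Set.mem_ofPred_eq, mulVec_smul, dotProduct_smul, smul_dotProduct, smul_eq_mul] at h1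
      have hv' : 0 < ‖v‖ := norm_pos_iff.2 hv
      calc w ⬝ᵥ A *ᵥ w * ‖v‖ ^ 2 ≤ ‖v‖⁻¹ * (‖v‖⁻¹ * (v ⬝ᵥ A *ᵥ v)) * ‖v‖ ^ 2 := by gcongr
        _ = v ⬝ᵥ A *ᵥ v := by field_simp

/-- The bounds `0 ⪯ A ⪯ M I` control every entry: test `A` on `e_a + e_b` and `e_a - e_b`. -/
lemma abs_entry_le {k : ℕ} {A : Matrix (Fin k) (Fin k) ℝ} {M : ℝ} (hs : A.IsSymm)
    (hA : A.PosSemidef) (hM : ((M • 1 : Matrix (Fin k) (Fin k) ℝ) - A).PosSemidef) (a b : Fin k) :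
    |A a b| ≤ M := by
  have hd : ∀ c, A c c ≤ M := fun c => by
    have := hM.diag_nonneg (i := c)
    simpa using this
  have h1 := posSemidef_nonneg hA (Pi.single a 1 + Pi.single b 1)
  have h2 := posSemidef_nonneg hA (Pi.single a 1 - Pi.single b 1)
  have h3 := hs.apply a b
  simp [mulVec_add, mulVec_sub, add_dotProduct, sub_dotProduct] at h1 h2
  rw [abs_le]
  constructor <;> linarith [hd a, hd b]

/-! ### Vanishing of the dissipation rate -/

/-- Barbalat's lemma for a dissipation rate: if `V ≥ 0` decreases at rate `q ≥ 0` and `q'` is bounded,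
then `q → 0`. As `V` converges, its mean slope over a short window tends to `0`; the mean value
theorem turns this slope into a value of `q`, and `q` varies little over the window. This uses no
integrability of `q`. -/
lemma tendsto_zero_of_dissipation {V q q' : ℝ → ℝ} (hV0 : ∀ t, 0 < t → 0 ≤ V t)
    (hV : ∀ t, 0 < t → HasDerivAt V (-q t) t) (hq0 : ∀ t, 0 < t → 0 ≤ q t)
    (hq : ∀ t, 0 < t → HasDerivAt q (q' t) t) (hq' : q' =O[atTop] (fun _ => (1 : ℝ))) :
    Tendsto q atTop (𝓝 0) := by
  have hanti : AntitoneOn V (Set.Ici 1) := by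
    refine antitoneOn_of_deriv_nonpos (convex_Ici 1) (fun t ht => ?_) (fun t ht => ?_)
      (fun t ht => ?_)
    · exact (hV t (lt_of_lt_of_le one_pos ht)).continuousAt.continuousWithinAt
    all_goals
      rw [interior_Ici] at ht
      have h0 : 0 < t := one_pos.trans ht
    · exact (hV t h0).differentiableAt.differentiableWithinAt
    · rw [(hV t h0).deriv]
      linarith [hq0 t h0]
  -- `V` converges to its infimum over `[1, ∞)`.
  obtain ⟨l, hl⟩ : ∃ l, Tendsto V atTop (𝓝 l) := by
    have hmono : Antitone fun t => V (max t 1) := fun x y hxy =>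
      hanti (Set.mem_Ici.2 (le_max_right _ _)) (Set.mem_Ici.2 (le_max_right _ _)) (max_le_max_right 1 hxy)
    have hbdd : BddBelow (Set.range fun t => V (max t 1)) :=
      ⟨0, by rintro _ ⟨t, rfl⟩; exact hV0 _ (lt_of_lt_of_le one_pos (le_max_right _ _))⟩
    refine ⟨_, (tendsto_atTop_ciInf hmono hbdd).congr' ?_⟩
    filter_upwards [eventually_ge_atTop 1] with t ht
    rw [max_eq_left ht]
  obtain ⟨L, hLpos, hL⟩ := hq'.exists_pos
  rw [isBigOWith_iff] at hL
  obtain ⟨t₀, ht₀⟩ := eventually_atTop.1 hL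
  rw [Metric.tendsto_atTop']
  intro ε hε
  -- the window length balancing the drift of `q` against its mean value
  set h := ε / (4 * L) with hh
  have hhpos : 0 < h := by positivity
  have hdiff : Tendsto (fun t => V t - V (t + h)) atTop (𝓝 0) := by
    simpa using hl.sub (hl.comp (tendsto_atTop_add_const_right _ h tendsto_id))
  obtain ⟨t₁, ht₁⟩ := eventually_atTop.1 (hdiff.eventually (gt_mem_nhds (show 0 < h * (ε / 2) by positivity)))
  refine ⟨max (max t₀ t₁) 0, fun t ht => ?_⟩
  have h0 : 0 < t := lt_of_le_of_lt (le_max_right _ _) ht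
  have htt₀ : t₀ ≤ t := ((le_max_left _ _).trans (le_max_left _ _)).trans ht.le
  have htt₁ : t₁ ≤ t := ((le_max_right _ _).trans (le_max_left _ _)).trans ht.le
  obtain ⟨ξ, hξ, hξe⟩ := exists_hasDerivAt_eq_slope V (fun τ => -q τ) (a := t) (b := t + h)
    (by linarith)
    (fun τ hτ => (hV τ (lt_of_lt_of_le h0 hτ.1)).continuousAt.continuousWithinAt)
    (fun τ hτ => hV τ (h0.trans hτ.1))
  have h1 : q ξ < ε / 2 := by
    have h2 := ht₁ t htt₁
    rw [add_sub_cancel_left, eq_div_iff hhpos.ne'] at hξe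
    have : h * q ξ < h * (ε / 2) := by linarith
    exact lt_of_mul_lt_mul_left this hhpos.le
  have h2 : ‖q ξ - q t‖ ≤ L * ‖ξ - t‖ := by
    refine Convex.norm_image_sub_le_of_norm_hasDerivWithin_le (s := Set.Ici t) (f := q)
      (f' := q') (fun x hx => (hq x (lt_of_lt_of_le h0 hx)).hasDerivWithinAt) (fun x hx => ?_)
      (convex_Ici t) (Set.mem_Ici.2 le_rfl) (Set.mem_Ici.2 hξ.1.le)
    simpa using ht₀ x (htt₀.trans hx)
  rw [Real.norm_eq_abs, Real.norm_eq_abs, abs_of_pos (sub_pos.2 hξ.1)] at h2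
  have h3 : L * (ξ - t) ≤ ε / 4 := by
    calc L * (ξ - t) ≤ L * h := by
          gcongr
          linarith [hξ.2]
      _ = ε / 4 := by rw [hh]; field_simp
  have h4 := (abs_le.1 h2).1
  rw [Real.dist_eq, sub_zero, abs_of_nonneg (hq0 t h0)]
  linarith

/-! ### Derivatives along the closed loop -/

/-- Energy balance of one robot: by `H' = C + Cᵀ` the Coriolis term does no work. -/
lemma hasDerivAt_kinetic {k m : ℕ} {H C : ℝ → Matrix (Fin k) (Fin k) ℝ}
    {KD : Matrix (Fin k) (Fin k) ℝ} {Y : Matrix (Fin k) (Fin m) ℝ} {s : ℝ → Fin k → ℝ}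
    {ds : Fin k → ℝ} {a : Fin m → ℝ} {t : ℝ} (hsymm : (H t).IsSymm)
    (hH : ∀ a b, HasDerivAt (fun τ => H τ a b) ((C t + (C t)ᵀ) a b) t)
    (hs : HasDerivAt s ds t) (hdyn : H t *ᵥ ds + (C t + KD) *ᵥ s t = Y *ᵥ a) :
    HasDerivAt (fun τ => s τ ⬝ᵥ H τ *ᵥ s τ)
      (2 * (s t ⬝ᵥ Y *ᵥ a) - 2 * (s t ⬝ᵥ KD *ᵥ s t)) t := by
  convert hasDerivAt_dotProduct hs (hasDerivAt_mulVec hH hs) using 1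
  have h1 : ds ⬝ᵥ H t *ᵥ s t = s t ⬝ᵥ H t *ᵥ ds := by
    rw [dotProduct_mulVec, ← mulVec_transpose, hsymm.eq, dotProduct_comm]
  have h2 : s t ⬝ᵥ (C t)ᵀ *ᵥ s t = s t ⬝ᵥ C t *ᵥ s t := by
    rw [mulVec_transpose, dotProduct_comm, ← dotProduct_mulVec]
  rw [h1, ← hdyn]
  simp only [add_mulVec, dotProduct_add, h2]
  ring

/-- The weight `P⁻¹` removes the adaptation gain from the derivative of the estimation energy. -/
lemma hasDerivAt_estimate {m : ℕ} {P : Matrix (Fin m) (Fin m) ℝ} (hP : P.PosDef)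
    {a : ℝ → Fin m → ℝ} {w : Fin m → ℝ} {t : ℝ} (ha : HasDerivAt a (-(P *ᵥ w)) t) :
    HasDerivAt (fun τ => a τ ⬝ᵥ P⁻¹ *ᵥ a τ) (-(2 * (a t ⬝ᵥ w))) t := by
  convert hasDerivAt_dotProduct ha (hasDerivAt_const_mulVec P⁻¹ ha) using 1
  have hdet : IsUnit P.det := hP.det_pos.ne'.isUnit
  have hsymm : Pᵀ = P := by simpa using hP.isHermitian.eq
  have h1 : (P *ᵥ w) ⬝ᵥ (P⁻¹ *ᵥ a t) = a t ⬝ᵥ w := by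
    rw [dotProduct_comm, ← hsymm, mulVec_transpose, dotProduct_comm, ← dotProduct_mulVec,
      mulVec_mulVec, hsymm, mul_nonsing_inv _ hdet, one_mulVec, dotProduct_comm]
  rw [neg_dotProduct, h1, mulVec_neg, mulVec_mulVec, nonsing_inv_mul _ hdet, one_mulVec,
    dotProduct_neg]
  ring

/-- The averaging coupling, summed over all robots, is minus a sum of squared disagreements.
No symmetry of `K` is needed. -/
lemma consensus_identity {n m : ℕ} {K : Matrix (Fin m) (Fin m) ℝ} (a : Fin n → Fin m → ℝ) :
    2 * ∑ i, a i ⬝ᵥ K *ᵥ ∑ j, (a j - a i) =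
      -∑ i, ∑ j, (a j - a i) ⬝ᵥ K *ᵥ (a j - a i) := by
  have h1 : ∀ i, a i ⬝ᵥ K *ᵥ ∑ j, (a j - a i) = ∑ j, a i ⬝ᵥ K *ᵥ (a j - a i) := fun i => by
    rw [mulVec_sum, dotProduct_sum]
  have h2 : ∑ i, ∑ j, a i ⬝ᵥ K *ᵥ (a j - a i) = ∑ i, ∑ j, a j ⬝ᵥ K *ᵥ (a i - a j) :=
    Finset.sum_comm
  simp only [h1]
  rw [two_mul]
  nth_rewrite 2 [h2]
  simp only [← Finset.sum_add_distrib, ← Finset.sum_neg_distrib]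
  refine Finset.sum_congr rfl fun i _ => Finset.sum_congr rfl fun j _ => ?_
  simp only [mulVec_sub, dotProduct_sub, sub_dotProduct]
  ring

/-- The cross term `(H s) · (Y a)` has derivative `|Y a|²` plus terms that are linear in `s`. Only `H s`
is differentiated along the momentum equation, so no derivative of `C` enters. -/
lemma hasDerivAt_cross {k m : ℕ} {H C : ℝ → Matrix (Fin k) (Fin k) ℝ}
    {KD : Matrix (Fin k) (Fin k) ℝ} {Y : ℝ → Matrix (Fin k) (Fin m) ℝ}
    {dY : Matrix (Fin k) (Fin m) ℝ} {s : ℝ → Fin k → ℝ}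
    {ds : Fin k → ℝ} {a : ℝ → Fin m → ℝ} {da : Fin m → ℝ} {t : ℝ}
    (hH : ∀ a b, HasDerivAt (fun τ => H τ a b) ((C t + (C t)ᵀ) a b) t)
    (hY : ∀ a b, HasDerivAt (fun τ => Y τ a b) (dY a b) t)
    (hs : HasDerivAt s ds t) (ha : HasDerivAt a da t)
    (hdyn : H t *ᵥ ds + (C t + KD) *ᵥ s t = Y t *ᵥ a t) :
    HasDerivAt (fun τ => (H τ *ᵥ s τ) ⬝ᵥ (Y τ *ᵥ a τ))
      ((Y t *ᵥ a t) ⬝ᵥ (Y t *ᵥ a t) + (((C t)ᵀ - KD) *ᵥ s t) ⬝ᵥ (Y t *ᵥ a t)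
        + (H t *ᵥ s t) ⬝ᵥ (dY *ᵥ a t + Y t *ᵥ da)) t := by
  convert hasDerivAt_dotProduct (hasDerivAt_mulVec hH hs) (hasDerivAt_mulVec hY ha) using 1
  have h : (C t + (C t)ᵀ) *ᵥ s t + H t *ᵥ ds = Y t *ᵥ a t + ((C t)ᵀ - KD) *ᵥ s t := by
    rw [← hdyn]
    simp only [add_mulVec, sub_mulVec]
    abel
  rw [h, add_dotProduct]

/-- The quadratic form of the integrated Gram matrix is the integral of `|W v|²`. -/
lemma quadForm_gramInt {k m : ℕ} {W : ℝ → Matrix (Fin k) (Fin m) ℝ} {t T : ℝ}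
    (hW : ∀ a b, ContinuousOn (fun τ => W τ a b) (Set.uIcc t (t + T))) (v : Fin m → ℝ) :
    v ⬝ᵥ (Matrix.of fun a b => ∫ τ in t..(t + T), ((W τ)ᵀ * W τ) a b) *ᵥ v
      = ∫ τ in t..(t + T), (W τ *ᵥ v) ⬝ᵥ (W τ *ᵥ v) := by
  have hint : ∀ a b, IntervalIntegrable (fun τ => ((W τ)ᵀ * W τ) a b) volume t (t + T) := by
    intro a b
    refine ContinuousOn.intervalIntegrable ?_
    simp only [mul_apply, transpose_apply]
    exact continuousOn_finsetSum _ fun c _ => (hW c a).mul (hW c b)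
  have h1 : ∀ τ, (W τ *ᵥ v) ⬝ᵥ (W τ *ᵥ v) = ∑ a, ∑ b, v a * (((W τ)ᵀ * W τ) a b * v b) := by
    intro τ
    rw [dotProduct_mulVec, ← mulVec_transpose, mulVec_mulVec, dotProduct_comm]
    simp only [dotProduct, mulVec, Finset.mul_sum]
  simp only [h1]
  rw [intervalIntegral.integral_finsetSum fun a _ => ?_]
  · simp only [dotProduct, mulVec, of_apply, Finset.mul_sum]
    refine Finset.sum_congr rfl fun a _ => ?_
    rw [intervalIntegral.integral_finsetSum fun b _ => ((hint a b).mul_const _).const_mul _]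
    refine Finset.sum_congr rfl fun b _ => ?_
    rw [intervalIntegral.integral_const_mul, intervalIntegral.integral_mul_const]
  · simpa only [Finset.sum_fn] using
      IntervalIntegrable.sum Finset.univ fun b _ => ((hint a b).mul_const (v b)).const_mul (v a)

/-! ### Estimates over one excitation window -/

lemma gram_quadForm_le {k m : ℕ} {A : Matrix (Fin k) (Fin m) ℝ} {c : ℝ}
    (hA : ∀ a b, |A a b| ≤ c) (w : Fin m → ℝ) :
    (A *ᵥ w) ⬝ᵥ (A *ᵥ w) ≤ k * (m * |c|) ^ 2 * ‖w‖ ^ 2 := by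
  have h1 : ‖A *ᵥ w‖ ≤ m * |c| * ‖w‖ := by
    refine (pi_norm_le_iff_of_nonneg (by positivity)).2 fun i => ?_
    have h2 : ‖A i‖ ≤ |c| := (pi_norm_le_iff_of_nonneg (abs_nonneg c)).2 fun b =>
      (hA i b).trans (le_abs_self c)
    calc |A i ⬝ᵥ w| ≤ m * (‖A i‖ * ‖w‖) := abs_dotProduct_le _ _
      _ ≤ m * (|c| * ‖w‖) := by gcongr
      _ = m * |c| * ‖w‖ := by ring
  calc (A *ᵥ w) ⬝ᵥ (A *ᵥ w) ≤ k * (‖A *ᵥ w‖ * ‖A *ᵥ w‖) :=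
        (le_abs_self _).trans (abs_dotProduct_le _ _)
    _ ≤ k * ((m * |c| * ‖w‖) * (m * |c| * ‖w‖)) := by gcongr
    _ = k * (m * |c|) ^ 2 * ‖w‖ ^ 2 := by ring

/-- Bound of the excitation energy of a fixed direction `v` over one window. If `v` is close to `a t`
and `a` drifts slowly, then `|Y v|²` is at most `2 |Y a|²` up to a small error, and `|Y a|²` is, up to
`r`, the derivative of the small function `g`. -/
lemma window_bound {k m : ℕ} {Y : ℝ → Matrix (Fin k) (Fin m) ℝ} {a a' : ℝ → Fin m → ℝ}
    {g r : ℝ → ℝ} {t T δ B : ℝ} {v : Fin m → ℝ} (hT : 0 < T) (hB : 0 ≤ B)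
    (hYc : ∀ a b, ContinuousOn (fun τ => Y τ a b) (Set.Icc t (t + T)))
    (hYB : ∀ τ ∈ Set.Icc t (t + T), ∀ w, (Y τ *ᵥ w) ⬝ᵥ (Y τ *ᵥ w) ≤ B * ‖w‖ ^ 2)
    (hg : ∀ τ ∈ Set.Icc t (t + T), HasDerivAt g ((Y τ *ᵥ a τ) ⬝ᵥ (Y τ *ᵥ a τ) + r τ) τ)
    (ha : ∀ τ ∈ Set.Icc t (t + T), HasDerivAt a (a' τ) τ)
    (hr : ∀ τ ∈ Set.Icc t (t + T), |r τ| ≤ δ) (ha' : ∀ τ ∈ Set.Icc t (t + T), ‖a' τ‖ ≤ δ)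
    (hgδ : ∀ τ ∈ Set.Icc t (t + T), |g τ| ≤ δ) (hv : ‖v - a t‖ ≤ δ) :
    ∫ τ in t..(t + T), (Y τ *ᵥ v) ⬝ᵥ (Y τ *ᵥ v)
      ≤ 4 * δ + T * (2 * δ + 2 * B * ((1 + T) * δ) ^ 2) := by
  have hle : t ≤ t + T := by linarith
  have hδ : 0 ≤ δ := (norm_nonneg _).trans hv
  set e := 2 * δ + 2 * B * ((1 + T) * δ) ^ 2 with he
  have hdrift : ∀ τ ∈ Set.Icc t (t + T), ‖v - a τ‖ ≤ (1 + T) * δ := by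
    intro τ hτ
    have h1 : ‖a τ - a t‖ ≤ δ * ‖τ - t‖ :=
      Convex.norm_image_sub_le_of_norm_hasDerivWithin_le
        (fun x hx => (ha x hx).hasDerivWithinAt) ha' (convex_Icc t (t + T))
        (Set.left_mem_Icc.2 hle) hτ
    rw [Real.norm_eq_abs, abs_of_nonneg (sub_nonneg.2 hτ.1)] at h1
    have h2 : δ * (τ - t) ≤ δ * T := by
      gcongr
      linarith [hτ.2]
    calc ‖v - a τ‖ = ‖(v - a t) - (a τ - a t)‖ := by congr 1; abel
      _ ≤ ‖v - a t‖ + ‖a τ - a t‖ := norm_sub_le _ _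
      _ ≤ (1 + T) * δ := by linarith
  have hpt : ∀ τ ∈ Set.Icc t (t + T), (Y τ *ᵥ v) ⬝ᵥ (Y τ *ᵥ v)
      ≤ 2 * ((Y τ *ᵥ a τ) ⬝ᵥ (Y τ *ᵥ a τ) + r τ) + e := by
    intro τ hτ
    have h1 := hYB τ hτ (v - a τ)
    have h2 : B * ‖v - a τ‖ ^ 2 ≤ B * ((1 + T) * δ) ^ 2 := by
      gcongr
      exact hdrift τ hτ
    have h3 := (abs_le.1 (hr τ hτ)).1
    -- parallelogram inequality `‖x + y‖² ≤ 2‖x‖² + 2‖y‖²` with `x + y = Y v`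
    have h4 : ∀ x y : Fin k → ℝ, x ⬝ᵥ x ≤ 2 * (y ⬝ᵥ y) + 2 * ((x - y) ⬝ᵥ (x - y)) := by
      intro x y
      simp only [dotProduct, Finset.mul_sum, ← Finset.sum_add_distrib]
      refine Finset.sum_le_sum fun i _ => ?_
      simp only [Pi.sub_apply]
      nlinarith [sq_nonneg (x i - 2 * y i)]
    have h5 := h4 (Y τ *ᵥ v) (Y τ *ᵥ a τ)
    rw [← mulVec_sub] at h5
    linarith
  have hcont : ContinuousOn (fun τ => (Y τ *ᵥ v) ⬝ᵥ (Y τ *ᵥ v)) (Set.Icc t (t + T)) := by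
    have h1 : ∀ c, ContinuousOn (fun τ => (Y τ *ᵥ v) c) (Set.Icc t (t + T)) := fun c =>
      continuousOn_finsetSum Finset.univ fun b _ =>
        (hYc c b).mul (continuousOn_const (c := v b))
    exact continuousOn_finsetSum _ fun c _ => (h1 c).mul (h1 c)
  have hG : ∀ τ ∈ Set.Icc t (t + T), HasDerivAt (fun τ => 2 * g τ + e * τ)
      (2 * ((Y τ *ᵥ a τ) ⬝ᵥ (Y τ *ᵥ a τ) + r τ) + e) τ := fun τ hτ => by
    have h1 := ((hg τ hτ).const_mul 2).add ((hasDerivAt_id τ).const_mul e)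
    rw [mul_one] at h1
    exact h1
  have hfin := intervalIntegral.integral_le_sub_of_hasDeriv_right_of_le hle
    (fun τ hτ => (hG τ hτ).continuousAt.continuousWithinAt)
    (fun τ hτ => (hG τ (Set.Ioo_subset_Icc_self hτ)).hasDerivWithinAt)
    hcont.integrableOn_Icc (fun τ hτ => hpt τ (Set.Ioo_subset_Icc_self hτ))
  have h1 := (abs_le.1 (hgδ t (Set.left_mem_Icc.2 hle))).1
  have h2 := (abs_le.1 (hgδ (t + T) (Set.right_mem_Icc.2 hle))).2
  linarith

lemma eventually_forall_window {p : ℝ → Prop} (h : ∀ᶠ t in atTop, p t) (T : ℝ) :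
    ∀ᶠ t in atTop, ∀ τ ∈ Set.Icc t (t + T), p τ := by
  obtain ⟨t₀, ht₀⟩ := eventually_atTop.1 h
  filter_upwards [eventually_ge_atTop t₀] with t ht τ hτ
  exact ht₀ τ (ht.trans hτ.1)

lemma isBigO_one_of_sq_le {k : ℕ} {u : ℝ → Fin k → ℝ} {c b : ℝ} (hc : 0 < c)
    (h : ∀ᶠ t in atTop, c * ‖u t‖ ^ 2 ≤ b) : u =O[atTop] (fun _ => (1 : ℝ)) := by
  refine IsBigO.of_bound (Real.sqrt (b / c)) ?_
  filter_upwards [h] with t ht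
  simp only [norm_one, mul_one]
  exact Real.le_sqrt_of_sq_le (by rwa [le_div_iff₀' hc])

lemma isLittleO_one_of_sq_le {k : ℕ} {u : ℝ → Fin k → ℝ} {c : ℝ} {f : ℝ → ℝ} (hc : 0 < c)
    (hf : Tendsto f atTop (𝓝 0)) (h : ∀ᶠ t in atTop, c * ‖u t‖ ^ 2 ≤ f t) :
    u =o[atTop] (fun _ => (1 : ℝ)) := by
  rw [isLittleO_one_iff]
  refine squeeze_zero_norm' (a := fun t => Real.sqrt (f t / c)) ?_ ?_
  · filter_upwards [h] with t ht
    exact Real.le_sqrt_of_sq_le (by rwa [le_div_iff₀' hc])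
  · simpa using (hf.div_const c).sqrt

/-! ### Convergence of the parameter errors -/

/-- Theorem 3 of the paper: multi-robot direct adaptive control with a
decentralized update law.  For `n` manipulators with error dynamics
`H_i ṡ_i + (C_i + K_{D_i}) s_i = Y_i ã_i` and decentralized update
`ã̇_i = −P_i [Y_iᵀ s_i − (K/n) ∑ⱼ (ã_j − ã_i)]`, collective persistency of excitation
of `{Y_1, …, Y_n}` implies every parameter error `ã_i → 0` as `t → ∞`. -/
theorem decentralized_parameter_convergence (n nj m : ℕ) (hn : 1 ≤ n)
    (H C : Fin n → ℝ → Matrix (Fin nj) (Fin nj) ℝ)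
    (KD : Fin n → Matrix (Fin nj) (Fin nj) ℝ)
    (Y dY : Fin n → ℝ → Matrix (Fin nj) (Fin m) ℝ)
    (Pm : Fin n → Matrix (Fin m) (Fin m) ℝ)
    (K : Matrix (Fin m) (Fin m) ℝ)
    (μ M : ℝ) (hμ : 0 < μ) (hμM : μ ≤ M)
    (s ds : Fin n → ℝ → Fin nj → ℝ) (at' : Fin n → ℝ → Fin m → ℝ)
    -- each `H i t` symmetric with `μ I ⪯ H i t ⪯ M I`, continuously differentiable
    (hHsymm : ∀ i t, 0 ≤ t → (H i t).IsSymm)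
    (hHlb : ∀ i t, 0 ≤ t → (H i t - μ • 1).PosSemidef)
    (hHub : ∀ i t, 0 ≤ t → ((M • 1 : Matrix (Fin nj) (Fin nj) ℝ) - H i t).PosSemidef)
    (hHd : ∀ i, ∀ t, 0 ≤ t → ∀ a b,
      HasDerivWithinAt (fun τ => H i τ a b) ((C i t + (C i t)ᵀ) a b) (Set.Ici 0) t)
    -- each `C i` continuous and bounded
    (hCc : ∀ i a b, ContinuousOn (fun t => C i t a b) (Set.Ici 0))
    (hCbd : ∃ c, ∀ i, ∀ t, 0 ≤ t → ∀ a b, |C i t a b| ≤ c)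
    -- the gains are symmetric positive definite
    (hKD : ∀ i, (KD i).PosDef) (hPm : ∀ i, (Pm i).PosDef) (hK : K.PosDef)
    -- each `Y i` continuously differentiable with `Y i` and `Y i '` bounded
    (hYd : ∀ i, ∀ t, 0 ≤ t → ∀ a b,
      HasDerivWithinAt (fun τ => Y i τ a b) (dY i t a b) (Set.Ici 0) t)
    (hdYc : ∀ i a b, ContinuousOn (fun t => dY i t a b) (Set.Ici 0))
    (hYbd : ∃ c, ∀ i, ∀ t, 0 ≤ t → ∀ a b, |Y i t a b| ≤ c ∧ |dY i t a b| ≤ c)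
    -- closed-loop dynamics and decentralized update law
    (hs : ∀ i, ∀ t, 0 ≤ t → HasDerivWithinAt (s i) (ds i t) (Set.Ici 0) t)
    (hdyn : ∀ i, ∀ t, 0 ≤ t →
      H i t *ᵥ ds i t + (C i t + KD i) *ᵥ s i t = Y i t *ᵥ at' i t)
    (hat : ∀ i, ∀ t, 0 ≤ t →
      HasDerivWithinAt (at' i)
        (-(Pm i *ᵥ ((Y i t)ᵀ *ᵥ s i t -
          (n : ℝ)⁻¹ • (K *ᵥ ∑ j, (at' j t - at' i t))))) (Set.Ici 0) t)
    -- collective persistency of excitation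
    (hPE : ∃ T > (0:ℝ), ∃ α > (0:ℝ), CollPEWith Y T α) :
    ∀ i, Tendsto (at' i) atTop (𝓝 0) := by
  classical
  obtain ⟨cC, hcC⟩ := hCbd
  obtain ⟨cY, hcY⟩ := hYbd
  obtain ⟨T, hT, α, hα, hPE⟩ := hPE
  have nhd : ∀ t : ℝ, 0 < t → Set.Ici (0 : ℝ) ∈ 𝓝 t := fun t ht => Ici_mem_nhds ht
  have ev0 : ∀ᶠ t : ℝ in atTop, 0 < t := eventually_gt_atTop 0
  have hn0 : (0 : ℝ) < n := by exact_mod_cast hn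
  set w : Fin n → ℝ → Fin m → ℝ := fun i t =>
    (Y i t)ᵀ *ᵥ s i t - (n : ℝ)⁻¹ • (K *ᵥ ∑ j, (at' j t - at' i t)) with hw
  set da : Fin n → ℝ → Fin m → ℝ := fun i t => -(Pm i *ᵥ w i t) with hda
  have hH' : ∀ i t, 0 < t → ∀ a b,
      HasDerivAt (fun τ => H i τ a b) ((C i t + (C i t)ᵀ) a b) t :=
    fun i t ht a b => (hHd i t ht.le a b).hasDerivAt (nhd t ht)
  have hY' : ∀ i t, 0 < t → ∀ a b, HasDerivAt (fun τ => Y i τ a b) (dY i t a b) t :=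
    fun i t ht a b => (hYd i t ht.le a b).hasDerivAt (nhd t ht)
  have hs' : ∀ i t, 0 < t → HasDerivAt (s i) (ds i t) t :=
    fun i t ht => (hs i t ht.le).hasDerivAt (nhd t ht)
  have ha' : ∀ i t, 0 < t → HasDerivAt (at' i) (da i t) t :=
    fun i t ht => (hat i t ht.le).hasDerivAt (nhd t ht)
  have hHquad : ∀ i t, 0 ≤ t → ∀ v, μ * ‖v‖ ^ 2 ≤ v ⬝ᵥ H i t *ᵥ v := by
    intro i t ht v
    have h1 := posSemidef_nonneg (hHlb i t ht) v
    simp only [sub_mulVec, smul_mulVec, one_mulVec, dotProduct_sub, dotProduct_smul,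
      smul_eq_mul] at h1
    have h2 := mul_le_mul_of_nonneg_left (norm_sq_le_dotProduct v) hμ.le
    linarith
  have hHpsd : ∀ i t, 0 ≤ t → (H i t).PosSemidef := by
    intro i t ht
    have h1 : (μ • 1 : Matrix (Fin nj) (Fin nj) ℝ).PosSemidef := PosSemidef.one.smul hμ.le
    simpa using (hHlb i t ht).add h1
  -- the Lyapunov function and its dissipation rate
  set V : ℝ → ℝ := fun t =>
    ∑ i, (s i t ⬝ᵥ H i t *ᵥ s i t + at' i t ⬝ᵥ (Pm i)⁻¹ *ᵥ at' i t) with hVdef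
  set q : ℝ → ℝ := fun t => 2 * ∑ i, s i t ⬝ᵥ KD i *ᵥ s i t +
    (n : ℝ)⁻¹ * ∑ i, ∑ j, (at' j t - at' i t) ⬝ᵥ K *ᵥ (at' j t - at' i t) with hqdef
  set q' : ℝ → ℝ := fun t => 2 * ∑ i, (ds i t ⬝ᵥ KD i *ᵥ s i t + s i t ⬝ᵥ KD i *ᵥ ds i t) +
    (n : ℝ)⁻¹ * ∑ i, ∑ j, ((da j t - da i t) ⬝ᵥ K *ᵥ (at' j t - at' i t) +
      (at' j t - at' i t) ⬝ᵥ K *ᵥ (da j t - da i t)) with hq'def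
  have hKD0 : ∀ i v, 0 ≤ v ⬝ᵥ KD i *ᵥ v := fun i => posSemidef_nonneg (hKD i).posSemidef
  have hK0 : ∀ v, 0 ≤ v ⬝ᵥ K *ᵥ v := posSemidef_nonneg hK.posSemidef
  have hP0 : ∀ i v, 0 ≤ v ⬝ᵥ (Pm i)⁻¹ *ᵥ v := fun i => posSemidef_nonneg (hPm i).inv.posSemidef
  have hH0 : ∀ i t, 0 ≤ t → ∀ v, 0 ≤ v ⬝ᵥ H i t *ᵥ v := fun i t ht =>
    posSemidef_nonneg (hHpsd i t ht)
  have hVi0 : ∀ t, 0 ≤ t → ∀ i ∈ Finset.univ,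
      0 ≤ s i t ⬝ᵥ H i t *ᵥ s i t + at' i t ⬝ᵥ (Pm i)⁻¹ *ᵥ at' i t := fun t ht i _ =>
    add_nonneg (hH0 i t ht _) (hP0 i _)
  have hV0 : ∀ t, 0 < t → 0 ≤ V t := fun t ht => Finset.sum_nonneg (hVi0 t ht.le)
  have hSK0 : ∀ t, 0 ≤ ∑ i, s i t ⬝ᵥ KD i *ᵥ s i t := fun t =>
    Finset.sum_nonneg fun i _ => hKD0 i _
  have hSA0 : ∀ t, 0 ≤ (n : ℝ)⁻¹ *
      ∑ i, ∑ j, (at' j t - at' i t) ⬝ᵥ K *ᵥ (at' j t - at' i t) := fun t =>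
    mul_nonneg (inv_nonneg.2 hn0.le)
      (Finset.sum_nonneg fun i _ => Finset.sum_nonneg fun j _ => hK0 _)
  have hq0 : ∀ t, 0 < t → 0 ≤ q t := fun t _ => by
    have := hSK0 t
    have := hSA0 t
    simp only [hqdef]
    linarith
  have hV : ∀ t, 0 < t → HasDerivAt V (-q t) t := by
    intro t ht
    have h1 : HasDerivAt V (∑ i, ((2 * (s i t ⬝ᵥ Y i t *ᵥ at' i t) -
        2 * (s i t ⬝ᵥ KD i *ᵥ s i t)) + -(2 * (at' i t ⬝ᵥ w i t)))) t :=
      HasDerivAt.fun_sum fun i _ =>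
        (hasDerivAt_kinetic (hHsymm i t ht.le) (hH' i t ht) (hs' i t ht)
          (hdyn i t ht.le)).add (hasDerivAt_estimate (hPm i) (ha' i t ht))
    convert h1 using 1
    -- the term `sᵢ · Yᵢ ãᵢ` of the adaptation cancels the one in the energy balance
    have h2 : ∀ i, at' i t ⬝ᵥ w i t = s i t ⬝ᵥ Y i t *ᵥ at' i t -
        (n : ℝ)⁻¹ * (at' i t ⬝ᵥ K *ᵥ ∑ j, (at' j t - at' i t)) := by
      intro i
      simp only [hw, dotProduct_sub, dotProduct_smul, smul_eq_mul]
      rw [mulVec_transpose, dotProduct_comm, ← dotProduct_mulVec]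
    have h3 : ∑ i, ((2 * (s i t ⬝ᵥ Y i t *ᵥ at' i t) -
        2 * (s i t ⬝ᵥ KD i *ᵥ s i t)) + -(2 * (at' i t ⬝ᵥ w i t)))
        = -2 * ∑ i, s i t ⬝ᵥ KD i *ᵥ s i t +
          (n : ℝ)⁻¹ * (2 * ∑ i, at' i t ⬝ᵥ K *ᵥ ∑ j, (at' j t - at' i t)) := by
      simp only [Finset.mul_sum, ← Finset.sum_add_distrib]
      refine Finset.sum_congr rfl fun i _ => ?_
      rw [h2]
      ring
    rw [h3, consensus_identity]
    simp only [hqdef]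
    ring
  have hq : ∀ t, 0 < t → HasDerivAt q (q' t) t := by
    intro t ht
    refine HasDerivAt.add (HasDerivAt.const_mul 2 (HasDerivAt.fun_sum fun i _ => ?_))
      (HasDerivAt.const_mul _ (HasDerivAt.fun_sum fun i _ => HasDerivAt.fun_sum fun j _ => ?_))
    · exact hasDerivAt_dotProduct (hs' i t ht) (hasDerivAt_const_mulVec _ (hs' i t ht))
    · exact hasDerivAt_dotProduct ((ha' j t ht).sub (ha' i t ht))
        (hasDerivAt_const_mulVec _ ((ha' j t ht).sub (ha' i t ht)))
  -- boundedness of every signal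
  have hVle : ∀ᶠ t in atTop, V t ≤ V 1 := by
    filter_upwards [eventually_ge_atTop 1] with t ht
    have hanti : AntitoneOn V (Set.Ici 1) := by
      refine antitoneOn_of_hasDerivWithinAt_nonpos (f' := fun t => -q t) (convex_Ici 1)
        (fun x hx => (hV x (lt_of_lt_of_le one_pos hx)).continuousAt.continuousWithinAt)
        (fun x hx => ?_) (fun x hx => ?_) <;> rw [interior_Ici] at hx
      · exact (hV x (one_pos.trans hx)).hasDerivWithinAt
      · exact neg_nonpos.2 (hq0 x (one_pos.trans hx))
    exact hanti (Set.mem_Ici.2 le_rfl) (Set.mem_Ici.2 ht) ht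
  have hsO : ∀ i, s i =O[atTop] (fun _ => (1 : ℝ)) := by
    intro i
    refine isBigO_one_of_sq_le (b := V 1) hμ ?_
    filter_upwards [hVle, ev0] with t h1 h2
    have h3 := Finset.single_le_sum (hVi0 t h2.le) (Finset.mem_univ i)
    have h4 := hHquad i t h2.le (s i t)
    have h5 := hP0 i (at' i t)
    simp only [hVdef] at h1 ⊢
    linarith
  have haO : ∀ i, at' i =O[atTop] (fun _ => (1 : ℝ)) := by
    intro i
    obtain ⟨c, hc, hcP⟩ := posDef_lower_bound (hPm i).inv
    refine isBigO_one_of_sq_le (b := V 1) hc ?_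
    filter_upwards [hVle, ev0] with t h1 h2
    have h3 := Finset.single_le_sum (hVi0 t h2.le) (Finset.mem_univ i)
    have h4 := hcP (at' i t)
    have h5 := hH0 i t h2.le (s i t)
    simp only [hVdef] at h1 ⊢
    linarith
  have hHO : ∀ i a b, (fun t => H i t a b) =O[atTop] (fun _ => (1 : ℝ)) := fun i a b =>
    IsBigO.of_bound M <| by
      filter_upwards [ev0] with t ht
      simpa using abs_entry_le (hHsymm i t ht.le) (hHpsd i t ht.le) (hHub i t ht.le) a b
  have hCO : ∀ i a b, (fun t => C i t a b) =O[atTop] (fun _ => (1 : ℝ)) := fun i a b =>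
    IsBigO.of_bound cC <| by
      filter_upwards [ev0] with t ht
      simpa using hcC i t ht.le a b
  have hYO : ∀ i a b, (fun t => Y i t a b) =O[atTop] (fun _ => (1 : ℝ)) := fun i a b =>
    IsBigO.of_bound cY <| by
      filter_upwards [ev0] with t ht
      simpa using (hcY i t ht.le a b).1
  have hdYO : ∀ i a b, (fun t => dY i t a b) =O[atTop] (fun _ => (1 : ℝ)) := fun i a b =>
    IsBigO.of_bound cY <| by
      filter_upwards [ev0] with t ht
      simpa using (hcY i t ht.le a b).2
  have hconst : ∀ {k l : ℕ} (A : Matrix (Fin k) (Fin l) ℝ) (a : Fin k) (b : Fin l),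
      (fun _ : ℝ => A a b) =O[atTop] (fun _ => (1 : ℝ)) := fun A a b => isBigO_const_one' _
  have hYaO : ∀ i, (fun t => Y i t *ᵥ at' i t) =O[atTop] (fun _ => (1 : ℝ)) := fun i =>
    mulVec_isBigO (hYO i) (haO i)
  have hdsO : ∀ i, ds i =O[atTop] (fun _ => (1 : ℝ)) := by
    intro i
    -- solve the momentum equation for `H ṡ`, then use `H ⪰ μ I`
    have h1 : (fun t => Y i t *ᵥ at' i t - (C i t + KD i) *ᵥ s i t)
        =O[atTop] (fun _ => (1 : ℝ)) :=
      (hYaO i).sub (mulVec_isBigO (fun a b => (hCO i a b).add (hconst (KD i) a b)) (hsO i))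
    refine IsBigO.trans (IsBigO.of_bound (nj / μ) ?_) h1
    filter_upwards [ev0] with t ht
    rw [← hdyn i t ht.le, add_sub_cancel_right]
    rcases (norm_nonneg (ds i t)).eq_or_lt with h0 | h0
    · rw [← h0]
      positivity
    · have h2 := (hHquad i t ht.le (ds i t)).trans
        ((le_abs_self _).trans (abs_dotProduct_le _ _))
      have h3 : ‖ds i t‖ * (μ * ‖ds i t‖) ≤ ‖ds i t‖ * (nj * ‖H i t *ᵥ ds i t‖) := by
        linarith
      have h4 := le_of_mul_le_mul_left h3 h0
      rw [div_mul_eq_mul_div, le_div_iff₀' hμ]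
      exact h4
  have hwO : ∀ i, w i =O[atTop] (fun _ => (1 : ℝ)) := fun i =>
    (mulVec_isBigO (fun a b => hYO i b a) (hsO i)).sub
      ((mulVec_isBigO (hconst K) (IsBigO.fun_sum fun j _ => (haO j).sub (haO i))).const_smul_left (n : ℝ)⁻¹)
  have hdaO : ∀ i, da i =O[atTop] (fun _ => (1 : ℝ)) := fun i =>
    (mulVec_isBigO (hconst (Pm i)) (hwO i)).neg_left
  have hdqO : q' =O[atTop] (fun _ => (1 : ℝ)) := by
    refine IsBigO.add (IsBigO.const_mul_left (IsBigO.fun_sum fun i _ => ?_) _)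
      (IsBigO.const_mul_left (IsBigO.fun_sum fun i _ => IsBigO.fun_sum fun j _ => ?_) _)
    · exact (dotProduct_isBigO (hdsO i) (mulVec_isBigO (hconst (KD i)) (hsO i))).add
        (dotProduct_isBigO (hsO i) (mulVec_isBigO (hconst (KD i)) (hdsO i)))
    · have h1 := (haO j).sub (haO i)
      have h2 := (hdaO j).sub (hdaO i)
      exact (dotProduct_isBigO h2 (mulVec_isBigO (hconst K) h1)).add
        (dotProduct_isBigO h1 (mulVec_isBigO (hconst K) h2))
  have hqlim : Tendsto q atTop (𝓝 0) := tendsto_zero_of_dissipation hV0 hV hq0 hq hdqO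
  -- vanishing tracking errors, disagreements and adaptation rates
  have hso : ∀ i, s i =o[atTop] (fun _ => (1 : ℝ)) := by
    intro i
    obtain ⟨c, hc, hcK⟩ := posDef_lower_bound (hKD i)
    refine isLittleO_one_of_sq_le hc hqlim (Eventually.of_forall fun t => ?_)
    have h1 := hcK (s i t)
    have h2 := Finset.single_le_sum (f := fun i => s i t ⬝ᵥ KD i *ᵥ s i t)
      (fun i _ => hKD0 i _) (Finset.mem_univ i)
    have h3 := hSA0 t
    have h4 := hSK0 t
    simp only [hqdef] at h2 ⊢
    linarith
  have hao : ∀ i j, (fun t => at' j t - at' i t) =o[atTop] (fun _ => (1 : ℝ)) := by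
    intro i j
    obtain ⟨c, hc, hcK⟩ := posDef_lower_bound hK
    refine isLittleO_one_of_sq_le (c := (n : ℝ)⁻¹ * c) (mul_pos (inv_pos.2 hn0) hc) hqlim
      (Eventually.of_forall fun t => ?_)
    have h1 := hcK (at' j t - at' i t)
    have h2 := Finset.single_le_sum
      (f := fun i => ∑ j, (at' j t - at' i t) ⬝ᵥ K *ᵥ (at' j t - at' i t))
      (fun i _ => Finset.sum_nonneg fun j _ => hK0 _) (Finset.mem_univ i)
    have h3 := Finset.single_le_sum
      (f := fun j => (at' j t - at' i t) ⬝ᵥ K *ᵥ (at' j t - at' i t))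
      (fun j _ => hK0 _) (Finset.mem_univ j)
    have h4 := hSK0 t
    have h5 := mul_le_mul_of_nonneg_left ((h1.trans h3).trans h2) (inv_nonneg.2 hn0.le)
    simp only [hqdef, mul_assoc] at h5 ⊢
    linarith
  have hwo : ∀ i, w i =o[atTop] (fun _ => (1 : ℝ)) := fun i =>
    (mulVec_isLittleO (fun a b => hYO i b a) (hso i)).sub
      ((mulVec_isLittleO (hconst K) (IsLittleO.fun_sum fun j _ => hao i j)).const_smul_left (n : ℝ)⁻¹)
  have hdao : ∀ i, da i =o[atTop] (fun _ => (1 : ℝ)) := fun i =>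
    (mulVec_isLittleO (hconst (Pm i)) (hwo i)).neg_left
  -- the cross terms `g i` and the part `r i` of their derivative that vanishes
  set g : Fin n → ℝ → ℝ := fun i t => (H i t *ᵥ s i t) ⬝ᵥ (Y i t *ᵥ at' i t) with hgdef
  set r : Fin n → ℝ → ℝ := fun i t => (((C i t)ᵀ - KD i) *ᵥ s i t) ⬝ᵥ (Y i t *ᵥ at' i t)
    + (H i t *ᵥ s i t) ⬝ᵥ (dY i t *ᵥ at' i t + Y i t *ᵥ da i t) with hrdef
  have hg : ∀ i t, 0 < t →
      HasDerivAt (g i) ((Y i t *ᵥ at' i t) ⬝ᵥ (Y i t *ᵥ at' i t) + r i t) t := by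
    intro i t ht
    have h1 := hasDerivAt_cross (hH' i t ht) (hY' i t ht) (hs' i t ht) (ha' i t ht)
      (hdyn i t ht.le)
    rwa [add_assoc] at h1
  have hgo : ∀ i, g i =o[atTop] (fun _ => (1 : ℝ)) := fun i =>
    dotProduct_isLittleO (mulVec_isLittleO (hHO i) (hso i)) (hYaO i)
  have hro : ∀ i, r i =o[atTop] (fun _ => (1 : ℝ)) := fun i =>
    (dotProduct_isLittleO (mulVec_isLittleO
      (fun a b => (hCO i b a).sub (hconst (KD i) a b)) (hso i)) (hYaO i)).add
    (dotProduct_isLittleO (mulVec_isLittleO (hHO i) (hso i))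
      ((mulVec_isBigO (hdYO i) (haO i)).add (mulVec_isBigO (hYO i) (hdaO i))))
  -- excitation in the fixed direction `ã_{i₀}(t)`; `B` bounds the Gram forms and `D` collects constants
  intro i₀
  set B : ℝ := nj * (m * |cY|) ^ 2 with hB
  have hB0 : 0 ≤ B := by positivity
  set D : ℝ := n * (4 + T * (2 + 2 * B * (1 + T) ^ 2)) with hD
  have hD0 : 0 < D := by positivity
  have hkey : ∀ δ : ℝ, 0 < δ → δ ≤ 1 → ∀ᶠ t in atTop, α * T * ‖at' i₀ t‖ ^ 2 ≤ D * δ := by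
    intro δ hδ hδ1
    have ev1 : ∀ᶠ t in atTop, ∀ i, ‖at' i₀ t - at' i t‖ ≤ δ :=
      eventually_all.2 fun i => by simpa using (hao i i₀).bound hδ
    have ev2 : ∀ᶠ t in atTop, ∀ i, ‖da i t‖ ≤ δ ∧ |g i t| ≤ δ ∧ |r i t| ≤ δ :=
      eventually_all.2 fun i => by
        filter_upwards [(hdao i).bound hδ, (hgo i).bound hδ, (hro i).bound hδ] with t h1 h2 h3
        simp only [norm_one, mul_one, Real.norm_eq_abs] at h1 h2 h3
        exact ⟨h1, h2, h3⟩
    filter_upwards [ev0, ev1, eventually_forall_window ev2 T] with t ht h1 h2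
    have hpos : ∀ τ ∈ Set.Icc t (t + T), 0 < τ := fun τ hτ => ht.trans_le hτ.1
    have hYc : ∀ i a b, ContinuousOn (fun τ => Y i τ a b) (Set.Icc t (t + T)) :=
      fun i a b τ hτ => (hY' i τ (hpos τ hτ) a b).continuousAt.continuousWithinAt
    have hwin : ∀ i, at' i₀ t ⬝ᵥ gramInt (Y i) t T *ᵥ at' i₀ t
        ≤ 4 * δ + T * (2 * δ + 2 * B * ((1 + T) * δ) ^ 2) := by
      intro i
      rw [gramInt, quadForm_gramInt (by rw [Set.uIcc_of_le (by linarith)]; exact hYc i)]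
      exact window_bound hT hB0 (hYc i)
        (fun τ hτ => gram_quadForm_le fun a b => (hcY i τ (hpos τ hτ).le a b).1)
        (fun τ hτ => hg i τ (hpos τ hτ)) (fun τ hτ => ha' i τ (hpos τ hτ))
        (fun τ hτ => (h2 τ hτ i).2.2) (fun τ hτ => (h2 τ hτ i).1)
        (fun τ hτ => (h2 τ hτ i).2.1) (h1 i)
    have h3 := posSemidef_nonneg (hPE t ht.le) (at' i₀ t)
    simp only [sub_mulVec, smul_mulVec, one_mulVec, dotProduct_sub, dotProduct_smul,
      smul_eq_mul, sum_mulVec, dotProduct_sum] at h3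
    have h4 : ∑ i, at' i₀ t ⬝ᵥ gramInt (Y i) t T *ᵥ at' i₀ t
        ≤ n * (4 * δ + T * (2 * δ + 2 * B * ((1 + T) * δ) ^ 2)) := by
      have := Finset.sum_le_card_nsmul Finset.univ _ _ fun i _ => hwin i
      rwa [Finset.card_univ, Fintype.card_fin, nsmul_eq_mul] at this
    have h5 : α * ‖at' i₀ t‖ ^ 2
        ≤ T⁻¹ * ∑ i, at' i₀ t ⬝ᵥ gramInt (Y i) t T *ᵥ at' i₀ t := by
      have := mul_le_mul_of_nonneg_left (norm_sq_le_dotProduct (at' i₀ t)) hα.le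
      linarith
    rw [inv_mul_eq_div, le_div_iff₀ hT] at h5
    have h6 : δ ^ 2 ≤ δ := by nlinarith
    calc α * T * ‖at' i₀ t‖ ^ 2 = α * ‖at' i₀ t‖ ^ 2 * T := by ring
      _ ≤ n * (4 * δ + T * (2 * δ + 2 * B * ((1 + T) * δ) ^ 2)) := h5.trans h4
      _ = n * (4 * δ + T * (2 * δ + 2 * B * (1 + T) ^ 2 * δ ^ 2)) := by ring
      _ ≤ n * (4 * δ + T * (2 * δ + 2 * B * (1 + T) ^ 2 * δ)) := by gcongr
      _ = D * δ := by rw [hD]; ring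
  have hsq : Tendsto (fun t => α * T * ‖at' i₀ t‖ ^ 2) atTop (𝓝 0) := by
    rw [Metric.tendsto_atTop']
    intro ε hε
    obtain ⟨t₁, ht₁⟩ := eventually_atTop.1
      (hkey (min 1 (ε / (2 * D))) (by positivity) (min_le_left _ _))
    refine ⟨t₁, fun t ht => ?_⟩
    rw [Real.dist_eq, sub_zero, abs_of_nonneg (by positivity)]
    calc α * T * ‖at' i₀ t‖ ^ 2 ≤ D * min 1 (ε / (2 * D)) := ht₁ t ht.le
      _ ≤ D * (ε / (2 * D)) := by gcongr; exact min_le_right _ _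
      _ = ε / 2 := by field_simp
      _ < ε := half_lt_self hε
  exact (isLittleO_one_iff ℝ).1
    (isLittleO_one_of_sq_le (mul_pos hα hT) hsq (Eventually.of_forall fun t => le_rfl))
end
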